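/- (Theorem 3: asymptotic lower bound on resource cost) Let ρ be a state on H_A and φ a pure state on H_B. Suppose C > 0 is an achievable dilution rate, i.e., there exist linear maps Λ_n : T_sa(H_B^{⊗⌈Cn⌉}) → T_sa(H_A^{⊗n}), each contracting both the trace norm and the resource norms (‖Λ_n(X)‖₁ ≤ ‖X‖₁ and ‖Λ_n(X)‖_μ ≤ ‖X‖_μ for all X), such that (1/2)‖Λ_n(φ^{⊗⌈Cn⌉}) − ρ^{⊗n}‖₁ → 0 as n → ∞. Then for every δ ∈ [0,1): C · limsup_{m→∞} (1/m) log₂ ‖φ^{⊗m}‖_μ ≥ limsup_{n→∞} (1/n) inf{D_ħ^δ(ρ^{⊗n}‖Z) : Z ∈ T_sa(H_A^{⊗n}), ‖Z‖_μ ≤ 1}. -/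

import Mathlib

/-!
The cost bound comes from testing the infimum over `Z` on a single operator. Write
`m = ⌈C n⌉`, `M = ‖φ^{⊗m}‖_μ` and `Y = Λ_n(φ^{⊗m})`. Then `M ≥ 1` because `φ^{⊗m}` is a state, and
`‖Y‖_μ ≤ M` by contractivity, so `Z = Y / M` is admissible.

By Hölder's inequality `|⟨Q, X⟩| ≤ ‖X‖₁` for `-1 ≤ Q ≤ 1` (`abs_hip_le_trNorm`), every feasible `Q`
satisfies `⟨Q, Y⟩ ≥ 1 - δ - ‖Y - ρ^{⊗n}‖₁`, which is at least `(1 - δ) / 2` for large `n`. Hence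
`D_ħ^δ(ρ^{⊗n}‖Z) ≤ log₂ M - log₂ ((1 - δ) / 2)` (`DEmanc_smul_le`). Dividing by `n` makes the second
term vanish, and `m / n → C` gives the factor `C` on the right.
-/

open scoped ComplexOrder
open Filter

noncomputable section

/-- The real vector space of self-adjoint (Hermitian) operators on `ℂ^ι`. -/
abbrev HMat (ι : Type) [Fintype ι] [DecidableEq ι] : Type :=
  selfAdjoint (Matrix ι ι ℂ)

variable {ι κ : Type} [Fintype ι] [DecidableEq ι] [Fintype κ] [DecidableEq κ]

/-- The matrix underlying a self-adjoint operator is Hermitian. -/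
def herm (X : HMat ι) : X.1.IsHermitian := X.2

/-- The (real) Hilbert–Schmidt inner product `⟨Q, X⟩ = Tr (Q X)`. -/
def hip (Q X : HMat ι) : ℝ := (Matrix.trace (Q.1 * X.1)).re

/-- The trace norm of a self-adjoint operator: the sum of absolute values of eigenvalues. -/
def trNorm (X : HMat ι) : ℝ := ∑ i, |(herm X).eigenvalues i|

/-- The operator norm of a self-adjoint operator: the largest absolute value of an eigenvalue. -/
def opNorm (X : HMat ι) : ℝ := ⨆ i, |(herm X).eigenvalues i|

/-- A state: a positive semidefinite operator of unit trace. -/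
def IsState (ρ : HMat ι) : Prop := ρ.1.PosSemidef ∧ Matrix.trace ρ.1 = 1

/-- A pure state: a rank-one orthogonal projection. -/
def IsPureState (φ : HMat ι) : Prop := IsState φ ∧ φ.1 * φ.1 = φ.1

/-- A norm-like function on self-adjoint operators. -/
structure MatNorm (ι : Type) [Fintype ι] [DecidableEq ι] where
  toFun : HMat ι → ℝ
  eq_zero' : ∀ X, toFun X = 0 → X = 0
  smul' : ∀ (t : ℝ) (X), toFun (t • X) = |t| * toFun X
  add_le' : ∀ X Y, toFun (X + Y) ≤ toFun X + toFun Y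

/-- A resource norm: a norm with `‖ρ‖ ≥ 1` on every state. -/
structure ResourceNorm (ι : Type) [Fintype ι] [DecidableEq ι] extends MatNorm ι where
  one_le_state' : ∀ ρ, IsState ρ → 1 ≤ toFun ρ

/-- The dual norm `‖Q‖° = sup {⟨Q, X⟩ : ‖X‖ ≤ 1}`. -/
def dualNormF (ν : HMat ι → ℝ) (Q : HMat ι) : ℝ :=
  sSup {r | ∃ X, ν X ≤ 1 ∧ r = hip Q X}

/-- Membership in the class `O_μ` of maps contracting the trace norm and the resource norms. -/
def MemO (νi : ResourceNorm ι) (νo : ResourceNorm κ) (Λ : HMat ι →ₗ[ℝ] HMat κ) : Prop :=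
  (∀ X, trNorm (Λ X) ≤ trNorm X) ∧ (∀ X, νo.toFun (Λ X) ≤ νi.toFun X)

/-- The trace-norm ε-ball around a state. -/
def ball (ρ : HMat ι) (ε : ℝ) : Set (HMat ι) :=
  {X | trNorm X ≤ 1 ∧ trNorm (X - ρ) ≤ ε}

/-- Loewner order: `A ≤ B` iff `B - A` is positive semidefinite. -/
def loew (A B : Matrix ι ι ℂ) : Prop := (B - A).PosSemidef

/-- The feasible values `⟨Q, Z⟩` entering the emancipated hypothesis testing quantity. -/
def dhSet (ρ Z : HMat ι) (ε : ℝ) : Set ℝ :=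
  {r | ∃ Q : HMat ι, loew (-(1 : Matrix ι ι ℂ)) Q.1 ∧ loew Q.1 1 ∧
        1 - ε ≤ hip Q ρ ∧ r = hip Q Z}

/-- The non-logarithmic emancipated hypothesis testing quantity `d_ħ^ε(ρ‖Z)`,
with value `+∞` when the infimum is `≤ 0`. -/
def dEmanc (ρ Z : HMat ι) (ε : ℝ) : EReal :=
  if 0 < sInf (dhSet ρ Z ε) then (((sInf (dhSet ρ Z ε))⁻¹ : ℝ) : EReal) else ⊤

/-- The emancipated hypothesis testing relative entropy `D_ħ^ε(ρ‖Z)` (base-2 logarithmic form),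
with value `+∞` when the infimum is `≤ 0`. -/
def DEmanc (ρ Z : HMat ι) (ε : ℝ) : EReal :=
  if 0 < sInf (dhSet ρ Z ε) then ((-Real.logb 2 (sInf (dhSet ρ Z ε)) : ℝ) : EReal) else ⊤


/-- The `n`-fold tensor (Kronecker) power of a self-adjoint operator. -/
def tpow {d : ℕ} (A : HMat (Fin d)) (n : ℕ) : HMat (Fin n → Fin d) :=
  ⟨Matrix.of fun i j => ∏ k, A.1 (i k) (j k), by
    refine Matrix.IsHermitian.isSelfAdjoint ?_
    refine Matrix.IsHermitian.ext fun i j => ?_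
    simp only [Matrix.of_apply]
    rw [star_prod]
    exact Finset.prod_congr rfl fun k _ => (herm A).apply (i k) (j k)⟩

/-- Combining operators on `m` and `n` copies into one on `m + n` copies (tensor product). -/
def kron {d m n : ℕ} (Y : HMat (Fin m → Fin d)) (Z : HMat (Fin n → Fin d)) :
    HMat (Fin (m + n) → Fin d) :=
  ⟨Matrix.of fun i j =>
      Y.1 (fun k => i (Fin.castAdd n k)) (fun k => j (Fin.castAdd n k)) *
        Z.1 (fun k => i (Fin.natAdd m k)) (fun k => j (Fin.natAdd m k)), by
    refine Matrix.IsHermitian.isSelfAdjoint ?_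
    refine Matrix.IsHermitian.ext fun i j => ?_
    simp only [Matrix.of_apply, star_mul']
    rw [(herm Y).apply, (herm Z).apply]⟩

open scoped MatrixOrder Matrix.Norms.L2Operator in
lemma tpow_isState {d : ℕ} {A : HMat (Fin d)} (hA : IsState A) (n : ℕ) : IsState (tpow A n) := by
  obtain ⟨hp, ht⟩ := hA
  constructor
  · -- if `A = Bᴴ B` then the tensor power of `A` is the Gram matrix of the tensor power of `B`
    obtain ⟨B, hB⟩ := CStarAlgebra.nonneg_iff_eq_star_mul_self.mp hp.nonneg
    have key : (tpow A n).1 =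
        (Matrix.of fun (i j : Fin n → Fin d) => ∏ k, B (i k) (j k)).conjTranspose *
        (Matrix.of fun (i j : Fin n → Fin d) => ∏ k, B (i k) (j k)) := by
      ext i j
      simp only [tpow, Matrix.of_apply, Matrix.mul_apply, Matrix.conjTranspose_apply, hB,
        Matrix.star_eq_conjTranspose, star_prod, ← Finset.prod_mul_distrib]
      rw [Finset.prod_univ_sum, Fintype.piFinset_univ]
    rw [key]
    exact Matrix.posSemidef_conjTranspose_mul_self _
  · have : Matrix.trace (tpow A n).1 = ∏ _k : Fin n, Matrix.trace A.1 := by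
      simp only [tpow, Matrix.trace, Matrix.diag_apply, Matrix.of_apply]
      rw [Finset.prod_univ_sum, Fintype.piFinset_univ]
    rw [this, ht, Finset.prod_const_one]

/-- Hölder's inequality between the trace norm and the operator-norm unit ball. -/
lemma abs_hip_le_trNorm (Q X : HMat ι) (h1 : loew (-(1 : Matrix ι ι ℂ)) Q.1) (h2 : loew Q.1 1) :
    |hip Q X| ≤ trNorm X := by
  set U : Matrix ι ι ℂ := ((herm X).eigenvectorUnitary : Matrix ι ι ℂ) with hU
  have hUU : star U * U = 1 := Unitary.coe_star_mul_self _
  set P : Matrix ι ι ℂ := star U * Q.1 * U with hP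
  -- in an eigenbasis of `X`, the pairing only sees the diagonal of `Q`
  have hsum : hip Q X = ∑ i, (P i i).re * (herm X).eigenvalues i := by
    have hX : X.1 = U * Matrix.diagonal (fun i => (((herm X).eigenvalues i : ℝ) : ℂ)) * star U := by
      have := (herm X).spectral_theorem
      rw [Unitary.conjStarAlgAut_apply] at this
      exact this
    have : Matrix.trace (Q.1 * X.1) =
        Matrix.trace (P * Matrix.diagonal (fun i => (((herm X).eigenvalues i : ℝ) : ℂ))) := by
      rw [congrArg (fun A => Matrix.trace (Q.1 * A)) hX, hP, ← mul_assoc, Matrix.trace_mul_comm]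
      simp only [mul_assoc]
    rw [hip, this, Matrix.trace, Complex.re_sum]
    refine Finset.sum_congr rfl fun i _ => ?_
    rw [Matrix.diag_apply, Matrix.mul_diagonal, Complex.re_mul_ofReal]
  have hdiag : ∀ i, |(P i i).re| ≤ 1 := by
    intro i
    have a1 : (star U * (Q.1 - -1) * U).PosSemidef := h1.conjTranspose_mul_mul_same U
    have a2 : (star U * (1 - Q.1) * U).PosSemidef := h2.conjTranspose_mul_mul_same U
    have e1 : star U * (Q.1 - -1) * U = P + 1 := by
      rw [sub_neg_eq_add, mul_add, add_mul, mul_one, hUU]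
    have e2 : star U * (1 - Q.1) * U = 1 - P := by
      rw [mul_sub, sub_mul, mul_one, hUU]
    rw [e1] at a1
    rw [e2] at a2
    have b1 := (Complex.le_def.mp (a1.diag_nonneg (i := i))).1
    have b2 := (Complex.le_def.mp (a2.diag_nonneg (i := i))).1
    simp at b1 b2
    rw [abs_le]
    constructor <;> linarith
  rw [hsum, trNorm]
  refine (Finset.abs_sum_le_sum_abs _ _).trans (Finset.sum_le_sum fun i _ => ?_)
  rw [abs_mul]
  exact mul_le_of_le_one_left (abs_nonneg _) (hdiag i)

lemma hip_sub (Q X Y : HMat ι) : hip Q (X - Y) = hip Q X - hip Q Y := by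
  simp [hip, mul_sub, Matrix.trace_sub]

lemma hip_smul (Q X : HMat ι) (t : ℝ) : hip Q (t • X) = t * hip Q X := by
  simp [hip, Matrix.trace_smul]

/-- If `Y` is within `(1 - δ) / 2` of the state `ρ` in trace norm, every feasible test `Q`
has `⟨Q, Y⟩ ≥ (1 - δ) / 2`, so rescaling `Y` by `M⁻¹` costs at most `log₂ M` plus a constant. -/
lemma DEmanc_smul_le {ρ Y : HMat ι} (hρ : IsState ρ) {δ M : ℝ} (hδ0 : 0 ≤ δ) (hδ1 : δ < 1)
    (hM : 0 < M) (hY : trNorm (Y - ρ) ≤ (1 - δ) / 2) :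
    DEmanc ρ (M⁻¹ • Y) δ ≤ ((Real.logb 2 M - Real.logb 2 ((1 - δ) / 2) : ℝ) : EReal) := by
  have hc : 0 < (1 - δ) / 2 := by linarith
  -- `Q = 1` is feasible; on an empty set `sInf` would take the junk value `0`
  have hne : (dhSet ρ (M⁻¹ • Y) δ).Nonempty := by
    refine ⟨_, 1, ?_, ?_, ?_, rfl⟩
    · have : ((1 : Matrix ι ι ℂ) - -1).PosSemidef := by
        rw [sub_neg_eq_add]
        exact Matrix.PosSemidef.one.add Matrix.PosSemidef.one
      exact this
    · have : ((1 : Matrix ι ι ℂ) - 1).PosSemidef := by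
        rw [sub_self]
        exact Matrix.PosSemidef.zero
      exact this
    · have : hip 1 ρ = 1 := by simp [hip, hρ.2]
      linarith
  have hle : M⁻¹ * ((1 - δ) / 2) ≤ sInf (dhSet ρ (M⁻¹ • Y) δ) := by
    refine le_csInf hne ?_
    rintro r ⟨Q, h1, h2, h3, rfl⟩
    rw [hip_smul]
    have h4 := (abs_le.mp ((abs_hip_le_trNorm Q (Y - ρ) h1 h2).trans hY)).1
    rw [hip_sub] at h4
    exact mul_le_mul_of_nonneg_left (by linarith) (inv_nonneg.mpr hM.le)
  have hpos : 0 < M⁻¹ * ((1 - δ) / 2) := by positivity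
  rw [DEmanc, if_pos (hpos.trans_le hle), EReal.coe_le_coe_iff]
  have := Real.logb_le_logb_of_le (b := 2) (by norm_num) hpos hle
  rw [Real.logb_mul (inv_ne_zero hM.ne') hc.ne', Real.logb_inv] at this
  linarith

/-- Passing to the subsequence `⌈C n⌉` multiplies a rate by `C`. -/
lemma limsup_rate_le (g : ℕ → ℝ) (hg : ∀ m, 0 ≤ g m) (C : ℝ) (hC : 0 < C) (c : ℝ) :
    limsup (fun n : ℕ => (((n : ℝ)⁻¹ * (g ⌈C * (n : ℝ)⌉₊ + c) : ℝ) : EReal)) atTop ≤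
      (C : EReal) * limsup (fun m : ℕ => (((m : ℝ)⁻¹ * g m : ℝ) : EReal)) atTop := by
  set L := limsup (fun m : ℕ => (((m : ℝ)⁻¹ * g m : ℝ) : EReal)) atTop with hL
  have hL0 : 0 ≤ L := by
    refine le_limsup_of_frequently_le (Frequently.of_forall fun m => ?_)
    have := hg m
    exact EReal.coe_nonneg.mpr (by positivity)
  rcases eq_or_ne L ⊤ with htop | htop
  · rw [htop, EReal.coe_mul_top_of_pos hC]
    exact le_top
  lift L to ℝ using ⟨htop, (EReal.bot_lt_zero.trans_le hL0).ne'⟩ with l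
  rw [← EReal.coe_mul, ← EReal.le_of_forall_lt_iff_le]
  intro z hz
  have hz' : l < z / C := by
    rw [lt_div_iff₀ hC, mul_comm]
    exact_mod_cast hz
  have hl0 : 0 ≤ l := by exact_mod_cast hL0
  obtain ⟨w, hlw, hwz⟩ := exists_between hz'
  have hw0 : 0 ≤ w := hl0.trans hlw.le
  have hev : ∀ᶠ m : ℕ in atTop, (m : ℝ)⁻¹ * g m < w := by
    have h : limsup (fun m : ℕ => (((m : ℝ)⁻¹ * g m : ℝ) : EReal)) atTop < (w : EReal) := by
      rw [← hL]
      exact_mod_cast hlw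
    filter_upwards [eventually_lt_of_limsup_lt h] with m hm
    exact_mod_cast hm
  have hceil : Tendsto (fun n : ℕ => ⌈C * (n : ℝ)⌉₊) atTop atTop :=
    tendsto_nat_ceil_atTop.comp (tendsto_natCast_atTop_atTop.const_mul_atTop hC)
  have hlim : Tendsto (fun n : ℕ => C * w + (n : ℝ)⁻¹ * (w + c)) atTop (nhds (C * w)) := by
    simpa using (tendsto_inv_atTop_nhds_zero_nat (𝕜 := ℝ)).mul_const (w + c) |>.const_add (C * w)
  have hCw : C * w < z := by
    rw [lt_div_iff₀ hC] at hwz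
    linarith
  refine limsup_le_of_le (h := ?_)
  filter_upwards [hceil.eventually hev, hlim.eventually (gt_mem_nhds hCw), eventually_gt_atTop 0]
    with n h1 h2 hn
  have hn' : (0 : ℝ) < n := by exact_mod_cast hn
  have hm : 0 < ((⌈C * (n : ℝ)⌉₊ : ℕ) : ℝ) := by
    exact_mod_cast Nat.ceil_pos.mpr (by positivity)
  have hm2 : ((⌈C * (n : ℝ)⌉₊ : ℕ) : ℝ) ≤ C * n + 1 := (Nat.ceil_lt_add_one (by positivity)).le
  rw [inv_mul_lt_iff₀ hm] at h1
  rw [EReal.coe_le_coe_iff]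
  refine le_trans ?_ h2.le
  have h3 : g ⌈C * (n : ℝ)⌉₊ ≤ (C * n + 1) * w :=
    h1.le.trans (mul_le_mul_of_nonneg_right hm2 hw0)
  calc (n : ℝ)⁻¹ * (g ⌈C * (n : ℝ)⌉₊ + c) ≤ (n : ℝ)⁻¹ * ((C * n + 1) * w + c) := by gcongr
    _ = C * w + (n : ℝ)⁻¹ * (w + c) := by field_simp; ring

/-- **Theorem 3 (asymptotic lower bound on resource cost).**
If `C > 0` is an achievable dilution rate from the pure state `φ` to `ρ`
via maps contracting the trace norm and the resource norms, then for every `δ ∈ [0,1)`,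
`C · limsup (1/m) log₂ ‖φ^{⊗m}‖_μ ≥ limsup (1/n) inf {D_ħ^δ(ρ^{⊗n}‖Z) : ‖Z‖_μ ≤ 1}`. -/
theorem cost_lower_bound
    {dA dB : ℕ}
    (νA : (n : ℕ) → ResourceNorm (Fin n → Fin dA))
    (νB : (n : ℕ) → ResourceNorm (Fin n → Fin dB))
    (ρ : HMat (Fin dA)) (hρ : IsState ρ)
    (φ : HMat (Fin dB)) (hφ : IsPureState φ)
    (C : ℝ) (hC : 0 < C)
    (Λ : (n : ℕ) → (HMat (Fin ⌈C * (n : ℝ)⌉₊ → Fin dB) →ₗ[ℝ] HMat (Fin n → Fin dA)))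
    (hΛtr : ∀ n X, trNorm ((Λ n) X) ≤ trNorm X)
    (hΛμ : ∀ n X, (νA n).toFun ((Λ n) X) ≤ (νB ⌈C * (n : ℝ)⌉₊).toFun X)
    (hconv : Tendsto
      (fun n : ℕ => (1 / 2) * trNorm ((Λ n) (tpow φ ⌈C * (n : ℝ)⌉₊) - tpow ρ n))
      atTop (nhds 0))
    (δ : ℝ) (hδ0 : 0 ≤ δ) (hδ1 : δ < 1) :
    Filter.limsup (fun n : ℕ => (((n : ℝ)⁻¹ : ℝ) : EReal) *
        ⨅ Z ∈ {Z : HMat (Fin n → Fin dA) | (νA n).toFun Z ≤ 1}, DEmanc (tpow ρ n) Z δ)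
        atTop ≤
      ((C : ℝ) : EReal) *
        Filter.limsup
          (fun m : ℕ => (((m : ℝ)⁻¹ * Real.logb 2 ((νB m).toFun (tpow φ m)) : ℝ) : EReal))
          atTop := by
  have hM1 : ∀ m, 1 ≤ (νB m).toFun (tpow φ m) := fun m =>
    (νB m).one_le_state' _ (tpow_isState hφ.1 m)
  refine le_trans ?_ (limsup_rate_le (fun m => Real.logb 2 ((νB m).toFun (tpow φ m)))
    (fun m => Real.logb_nonneg (by norm_num) (hM1 m)) C hC (-Real.logb 2 ((1 - δ) / 2)))
  refine limsup_le_limsup ?_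
  have hε : (0 : ℝ) < (1 - δ) / 4 := by linarith
  filter_upwards [hconv.eventually (gt_mem_nhds hε)] with n hn
  have hM := hM1 ⌈C * (n : ℝ)⌉₊
  set M := (νB ⌈C * (n : ℝ)⌉₊).toFun (tpow φ ⌈C * (n : ℝ)⌉₊) with hMdef
  have hMpos : 0 < M := by linarith
  have hZ : (νA n).toFun (M⁻¹ • Λ n (tpow φ ⌈C * (n : ℝ)⌉₊)) ≤ 1 := by
    rw [(νA n).smul', abs_of_pos (inv_pos.mpr hMpos), inv_mul_le_iff₀ hMpos, mul_one]
    exact hΛμ n _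
  rw [EReal.coe_mul]
  refine mul_le_mul_of_nonneg_left ?_ (EReal.coe_nonneg.mpr (by positivity))
  refine (iInf₂_le (α := EReal) (M⁻¹ • Λ n (tpow φ ⌈C * (n : ℝ)⌉₊)) hZ).trans ?_
  rw [← sub_eq_add_neg]
  exact DEmanc_smul_le (tpow_isState hρ n) hδ0 hδ1 hMpos (by linarith)
end
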